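/- Fix a ∈ ℝ. Let (Φ, W, Ψ, θ) be a solution of system (D) defined on (−∞, 0] with Φ(τ) > 0 and θ(τ) ∈ (−π/2, π/2) for all τ ≤ 0, and suppose Φ(τ) → +∞ as τ → −∞. Set x = (Φ(0), W(0), Ψ(0), θ(0)). Then there exists δ > 0 such that for every y = (Φ̃₀, W̃₀, Ψ̃₀, θ̃₀) ∈ ℝ⁴ with |y − x| < δ, Φ̃₀ > 0 and θ̃₀ ∈ (−π/2, π/2), there exists a solution (Φ̃, W̃, Ψ̃, θ̃) of system (D) on (−∞, 0] with (Φ̃, W̃, Ψ̃, θ̃)(0) = y, Φ̃ > 0 on (−∞, 0], and Φ̃(τ) → +∞ as τ → −∞. -/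

import Mathlib

open Filter Set

/-- The right-hand side of the `Ψ` equation in system (D). -/
noncomputable def dPsi (a Φ W Ψ θ : ℝ) : ℝ :=
  1 / Φ ^ 3 - 1 - (a - 1) * Real.cos θ ^ 2 -
    (((16 / 3) * Real.sin θ - (224 / 27) * Real.sin θ ^ 3) * Real.cos θ ^ ((17 : ℝ) / 3) * Φ
      + ((208 / 81) * Real.sin θ ^ 2 - 10 / 9) * Real.cos θ ^ ((34 : ℝ) / 9) * W
      + (2 / 3) * Real.sin θ * Real.cos θ ^ ((17 : ℝ) / 9) * Ψ)

/-- `(Φ, W, Ψ, θ)` is a solution of system (D) on the set `s`. -/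
noncomputable def SolDOn (a : ℝ) (s : Set ℝ) (Φ W Ψ θ : ℝ → ℝ) : Prop :=
  ∀ τ ∈ s,
    HasDerivWithinAt Φ (W τ) s τ ∧
    HasDerivWithinAt W (Ψ τ) s τ ∧
    HasDerivWithinAt Ψ (dPsi a (Φ τ) (W τ) (Ψ τ) (θ τ)) s τ ∧
    HasDerivWithinAt θ (Real.cos (θ τ) ^ ((26 : ℝ) / 9)) s τ

/-!
Put `ξ = tan θ`, `H = Φ (cos θ) ^ (2 / 3)` and `s = e - ξ`, where `e` is the initial value of `ξ`.
System (D) on `τ ≤ 0` becomes the single equation `H''' = (e - s)² + a - 1 / H³` on `s ≥ 0`. Blow-up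
of `Φ` forces the right-hand side to be eventually at least `1`, hence `H`, `H'` and `H''` all
tend to infinity and `H` stays above some `2ε > 0`. The equation whose singular term is frozen for
`H ≤ ε` is globally Lipschitz, so by Grönwall's inequality its solutions with nearby data stay
close to `H` up to a time `S` after which the forcing `(e - s)²` alone keeps them increasing. They
therefore never enter `H ≤ ε`, solve the original equation, and blow up as well.
-/

open scoped NNReal Topology

section LipschitzField

variable {E : Type*} [NormedAddCommGroup E] [NormedSpace ℝ E] {v : ℝ → E → E} {K : ℝ≥0}

lemma isIntegralCurveOn_congr {γ γ' : ℝ → E} {s : Set ℝ} (h : IsIntegralCurveOn γ v s)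
    (heq : EqOn γ' γ s) : IsIntegralCurveOn γ' v s := fun t ht ↦ by
  simpa only [heq ht] using (h t ht).congr heq (heq ht)

lemma isIntegralCurveOn_union {γ : ℝ → E} {s t : Set ℝ} (hs : IsClosed s) (ht : IsClosed t)
    (hγs : IsIntegralCurveOn γ v s) (hγt : IsIntegralCurveOn γ v t) :
    IsIntegralCurveOn γ v (s ∪ t) := by
  have within : ∀ {u : Set ℝ}, IsClosed u → IsIntegralCurveOn γ v u →
      ∀ x, HasDerivWithinAt γ (v x (γ x)) u x := fun {u} hu hγ x ↦ by
    by_cases hx : x ∈ u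
    · exact hγ x hx
    · rw [← hu.closure_eq] at hx
      exact hasDerivWithinAt_iff_hasFDerivWithinAt.2 (.of_notMem_closure hx)
  exact fun x _ ↦ (within hs hγs x).union (within ht hγt x)

lemma exists_isIntegralCurveOn_Icc_trans {α β : ℝ → E} {a b c : ℝ} (hab : a ≤ b) (hbc : b ≤ c)
    (hα : IsIntegralCurveOn α v (Icc a b)) (hβ : IsIntegralCurveOn β v (Icc b c))
    (hb : α b = β b) :
    ∃ γ, IsIntegralCurveOn γ v (Icc a c) ∧ EqOn γ α (Icc a b) ∧ EqOn γ β (Icc b c) := by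
  classical
  have hγα : EqOn ((Iic b).piecewise α β) α (Icc a b) := fun t ht ↦
    piecewise_eq_of_mem _ _ _ ht.2
  have hγβ : EqOn ((Iic b).piecewise α β) β (Icc b c) := fun t ht ↦ by
    rcases ht.1.eq_or_lt with rfl | hlt
    · rw [hγα ⟨hab, le_rfl⟩, hb]
    · exact piecewise_eq_of_notMem _ _ _ (notMem_Iic.2 hlt)
  refine ⟨_, ?_, hγα, hγβ⟩
  rw [← Icc_union_Icc_eq_Icc hab hbc]
  exact isIntegralCurveOn_union isClosed_Icc isClosed_Icc (isIntegralCurveOn_congr hα hγα)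
    (isIntegralCurveOn_congr hβ hγβ)

lemma eqOn_Ioo_of_isIntegralCurveOn_Icc {α β : ℝ → E} {t₀ T : ℝ} (hv : ∀ t, LipschitzWith K (v t))
    (hα : IsIntegralCurveOn α v (Icc (t₀ - T) (t₀ + T)))
    (hβ : IsIntegralCurveOn β v (Icc (t₀ - T) (t₀ + T))) (h₀ : α t₀ = β t₀) :
    EqOn α β (Ioo (t₀ - T) (t₀ + T)) := by
  intro t ht
  have hasDerivAt : ∀ {γ : ℝ → E}, IsIntegralCurveOn γ v (Icc (t₀ - T) (t₀ + T)) →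
      ∀ s ∈ Ioo (t₀ - T) (t₀ + T), HasDerivAt γ (v s (γ s)) s ∧ γ s ∈ univ := fun hγ s hs ↦
    ⟨(hγ s (Ioo_subset_Icc_self hs)).hasDerivAt (Icc_mem_nhds hs.1 hs.2), mem_univ _⟩
  exact ODE_solution_unique_of_mem_Ioo (fun s _ ↦ (hv s).lipschitzOnWith)
    (⟨by linarith [ht.1, ht.2], by linarith [ht.1, ht.2]⟩ : t₀ ∈ Ioo (t₀ - T) (t₀ + T))
    (hasDerivAt hα) (hasDerivAt hβ) h₀ ht

section Existence

variable [CompleteSpace E]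

lemma exists_isIntegralCurveOn_Icc_of_mul_le (hv : ∀ t, LipschitzWith K (v t))
    (hc : ∀ x, Continuous (v · x)) {r : ℝ} (hr : 0 ≤ r) (hKr : K * r ≤ 1 / 2) (t₀ : ℝ) (x₀ : E) :
    ∃ α : ℝ → E, α t₀ = x₀ ∧ IsIntegralCurveOn α v (Icc (t₀ - r) (t₀ + r)) := by
  obtain ⟨M, hM⟩ := (isCompact_Icc (a := t₀ - r) (b := t₀ + r)).exists_bound_of_continuousOn
    (hc x₀).continuousOn
  have ht₀ : t₀ ∈ Icc (t₀ - r) (t₀ + r) := ⟨by linarith, by linarith⟩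
  lift M to ℝ≥0 using (norm_nonneg _).trans (hM t₀ ht₀)
  lift r to ℝ≥0 using hr
  have hPL : IsPicardLindelof v ⟨t₀, ht₀⟩ x₀ (2 * r * M) 0 (M + K * (2 * r * M)) K := by
    refine ⟨fun t _ ↦ (hv t).lipschitzOnWith, fun x _ ↦ (hc x).continuousOn, fun t ht x hx ↦ ?_, ?_⟩
    · calc ‖v t x‖ ≤ ‖v t x₀‖ + dist (v t x) (v t x₀) := by
            rw [dist_eq_norm]; exact norm_le_norm_add_norm_sub' _ _
        _ ≤ M + K * (2 * r * M) := by
            gcongr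
            · exact hM t ht
            · exact ((hv t).dist_le_mul x x₀).trans (by gcongr; exact hx)
        _ = _ := by push_cast; rfl
    · simp only [add_sub_cancel_left, sub_sub_cancel, max_self, NNReal.coe_zero, sub_zero]
      push_cast
      nlinarith [mul_le_mul_of_nonneg_right hKr (show 0 ≤ (2 * r * M : ℝ) by positivity)]
  exact hPL.exists_eq_forall_mem_Icc_hasDerivWithinAt₀

lemma exists_isIntegralCurveOn_Icc_add (hv : ∀ t, LipschitzWith K (v t))
    (hc : ∀ x, Continuous (v · x)) {r R : ℝ} (hr : 0 ≤ r) (hKr : K * r ≤ 1 / 2) (hR : 0 ≤ R)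
    {α : ℝ → E} {t₀ : ℝ} (hα : IsIntegralCurveOn α v (Icc (t₀ - R) (t₀ + R))) :
    ∃ γ : ℝ → E, γ t₀ = α t₀ ∧ IsIntegralCurveOn γ v (Icc (t₀ - (R + r)) (t₀ + (R + r))) := by
  obtain ⟨β, hβ₀, hβ⟩ := exists_isIntegralCurveOn_Icc_of_mul_le hv hc hr hKr
    (t₀ - R) (α (t₀ - R))
  obtain ⟨β', hβ'₀, hβ'⟩ := exists_isIntegralCurveOn_Icc_of_mul_le hv hc hr hKr
    (t₀ + R) (α (t₀ + R))
  obtain ⟨η, hη, hηα, -⟩ := exists_isIntegralCurveOn_Icc_trans (by linarith) (by linarith)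
    hα (hβ'.mono (Icc_subset_Icc_left (by linarith))) hβ'₀.symm
  obtain ⟨γ, hγ, -, hγη⟩ := exists_isIntegralCurveOn_Icc_trans (by linarith) (by linarith)
    (hβ.mono (Icc_subset_Icc_right (by linarith))) hη
    (hβ₀.trans (hηα ⟨le_rfl, by linarith⟩).symm)
  refine ⟨γ, ?_, hγ.mono (Icc_subset_Icc (by linarith) (by linarith))⟩
  rw [hγη ⟨by linarith, by linarith⟩, hηα ⟨by linarith, by linarith⟩]

lemma exists_isIntegralCurveOn_Icc (hv : ∀ t, LipschitzWith K (v t))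
    (hc : ∀ x, Continuous (v · x)) (t₀ : ℝ) (x₀ : E) (T : ℝ) :
    ∃ α : ℝ → E, α t₀ = x₀ ∧ IsIntegralCurveOn α v (Icc (t₀ - T) (t₀ + T)) := by
  obtain ⟨r, hr, hKr⟩ : ∃ r : ℝ, 0 < r ∧ K * r ≤ 1 / 2 :=
    ⟨1 / (2 * (K + 1)), by positivity, by
      rw [mul_one_div, div_le_div_iff₀ (by positivity) two_pos]; linarith⟩
  have hn : ∀ n : ℕ, ∃ α : ℝ → E, α t₀ = x₀ ∧
      IsIntegralCurveOn α v (Icc (t₀ - n * r) (t₀ + n * r)) := fun n ↦ by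
    induction n with
    | zero => simpa using exists_isIntegralCurveOn_Icc_of_mul_le hv hc le_rfl (by simp) t₀ x₀
    | succ n ih =>
      obtain ⟨α, hα₀, hα⟩ := ih
      rw [Nat.cast_succ, add_one_mul, ← hα₀]
      exact exists_isIntegralCurveOn_Icc_add hv hc hr.le hKr (by positivity) hα
  obtain ⟨n, hTn⟩ := Archimedean.arch T hr
  rw [nsmul_eq_mul] at hTn
  obtain ⟨α, hα₀, hα⟩ := hn n
  exact ⟨α, hα₀, hα.mono (Icc_subset_Icc (by linarith) (by linarith))⟩

theorem exists_isIntegralCurve_of_lipschitzWith (hv : ∀ t, LipschitzWith K (v t))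
    (hc : ∀ x, Continuous (v · x)) (t₀ : ℝ) (x₀ : E) :
    ∃ γ : ℝ → E, γ t₀ = x₀ ∧ IsIntegralCurve γ v := by
  choose α hα₀ hα using exists_isIntegralCurveOn_Icc hv hc t₀ x₀
  have agree : ∀ {T T' t : ℝ}, |t - t₀| < T → T ≤ T' → α T' t = α T t := fun {T T' t} ht hTT' ↦
    eqOn_Ioo_of_isIntegralCurveOn_Icc hv ((hα T').mono (Icc_subset_Icc (by linarith) (by linarith)))
      (hα T) (by rw [hα₀, hα₀]) (by
        rw [abs_lt] at ht; exact ⟨by linarith [ht.1], by linarith [ht.2]⟩)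
  refine ⟨fun t ↦ α (|t - t₀| + 1) t, hα₀ _, fun t ↦ ?_⟩
  have hmem : t ∈ Ioo (t₀ - (|t - t₀| + 2)) (t₀ + (|t - t₀| + 2)) :=
    ⟨by linarith [neg_abs_le (t - t₀)], by linarith [le_abs_self (t - t₀)]⟩
  have hγ : (fun s ↦ α (|s - t₀| + 1) s) =ᶠ[𝓝 t] α (|t - t₀| + 2) := by
    filter_upwards [Metric.ball_mem_nhds t one_pos] with s hs
    rw [Metric.mem_ball, Real.dist_eq] at hs
    refine (agree (lt_add_one _) ?_).symm
    have : |s - t₀| ≤ |s - t| + |t - t₀| := abs_sub_le s t t₀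
    linarith
  have := (hα _ t (Ioo_subset_Icc_self hmem)).hasDerivAt (Icc_mem_nhds hmem.1 hmem.2)
  rw [← hγ.eq_of_nhds] at this
  exact this.congr_of_eventuallyEq hγ

end Existence

lemma exists_pos_forall_dist_lt_of_isIntegralCurveOn (K : ℝ≥0) (S : ℝ) {ε : ℝ} (hε : 0 < ε) :
    ∃ δ > 0, ∀ {v w : ℝ → E → E} {α β : ℝ → E}, (∀ t, LipschitzWith K (v t)) →
      IsIntegralCurveOn α v (Icc 0 S) → IsIntegralCurveOn β w (Icc 0 S) →
      dist (α 0) (β 0) ≤ δ → (∀ t ∈ Icc 0 S, dist (w t (β t)) (v t (β t)) ≤ δ) →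
      ∀ t ∈ Icc 0 S, dist (α t) (β t) < ε := by
  have hcont : Continuous fun δ ↦ gronwallBound δ K δ S := by
    unfold gronwallBound; split_ifs <;> fun_prop
  have hlim : Tendsto (fun δ ↦ gronwallBound δ K δ S) (𝓝[>] 0) (𝓝 0) := by
    simpa only [gronwallBound_ε0_δ0] using (hcont.tendsto 0).mono_left nhdsWithin_le_nhds
  obtain ⟨δ, hδε, hδ⟩ := ((hlim.eventually (gt_mem_nhds hε)).and self_mem_nhdsWithin).exists
  refine ⟨δ, hδ, fun {v w α β} hv hα hβ h₀ hvw t ht ↦ ?_⟩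
  have right : ∀ {γ : ℝ → E} {u : ℝ → E → E}, IsIntegralCurveOn γ u (Icc 0 S) → ∀ s ∈ Ico 0 S,
      HasDerivWithinAt γ (u s (γ s)) (Ici s) s := fun hγ s hs ↦
    (hγ s (Ico_subset_Icc_self hs)).mono_of_mem_nhdsWithin (Icc_mem_nhdsGE_of_mem hs)
  calc dist (α t) (β t) ≤ gronwallBound δ K (0 + δ) (t - 0) :=
        dist_le_of_approx_trajectories_ODE hv hα.continuousOn (right hα)
          (fun s _ ↦ (dist_self _).le) hβ.continuousOn (right hβ)
          (fun s hs ↦ hvw s (Ico_subset_Icc_self hs)) h₀ t ht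
    _ ≤ gronwallBound δ K δ S := by
        rw [zero_add, sub_zero]; exact gronwallBound_mono hδ.le hδ.le K.2 ht.2
    _ < ε := hδε

end LipschitzField

section Growth

lemma monotoneOn_Ici_of_hasDerivWithinAt_nonneg {f f' : ℝ → ℝ} {t₀ S : ℝ} (hS : t₀ ≤ S)
    (hf : ∀ t ∈ Ici t₀, HasDerivWithinAt f (f' t) (Ici t₀) t) (hf' : ∀ t ≥ S, 0 ≤ f' t) :
    MonotoneOn f (Ici S) := by
  have hsub : Ici S ⊆ Ici t₀ := Ici_subset_Ici.2 hS
  exact monotoneOn_of_hasDerivWithinAt_nonneg (convex_Ici S)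
    (fun t ht ↦ (hf t (hsub ht)).continuousWithinAt.mono hsub)
    (fun t ht ↦ (hf t (hsub (interior_subset ht))).mono (interior_subset.trans hsub))
    (fun t ht ↦ hf' t (interior_subset ht))

lemma tendsto_atTop_of_hasDerivWithinAt_ge {f f' : ℝ → ℝ} {t₀ c : ℝ} (hc : 0 < c)
    (hf : ∀ t ∈ Ici t₀, HasDerivWithinAt f (f' t) (Ici t₀) t) (hf' : ∀ᶠ t in atTop, c ≤ f' t) :
    Tendsto f atTop atTop := by
  obtain ⟨S, hS⟩ := eventually_atTop.1 hf'
  have hmono : MonotoneOn (fun t ↦ f t - c * t) (Ici (max t₀ S)) :=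
    monotoneOn_Ici_of_hasDerivWithinAt_nonneg (le_max_left t₀ S)
      (fun t ht ↦ (hf t ht).sub ((hasDerivWithinAt_id t _).const_mul c))
      (fun t ht ↦ by linarith [hS t ((le_max_right t₀ S).trans ht)])
  refine tendsto_atTop_mono' _ ?_ (tendsto_atTop_add_const_left _
    (f (max t₀ S) - c * max t₀ S) (tendsto_id.const_mul_atTop hc))
  filter_upwards [eventually_ge_atTop (max t₀ S)] with t ht
  have := hmono self_mem_Ici ht ht
  simp only [id] at this ⊢
  linarith

lemma surjective_of_hasDerivAt_ge {f f' : ℝ → ℝ} {c : ℝ} (hc : 0 < c)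
    (hf : ∀ x, HasDerivAt f (f' x) x) (hf' : ∀ x, c ≤ f' x) : Function.Surjective f := by
  have hcont : Continuous f := continuous_iff_continuousAt.2 fun x ↦ (hf x).continuousAt
  have htop : Tendsto f atTop atTop := tendsto_atTop_of_hasDerivWithinAt_ge (t₀ := 0) hc
    (fun x _ ↦ (hf x).hasDerivWithinAt) (.of_forall hf')
  have hneg : Tendsto (fun x ↦ -f (-x)) atTop atTop :=
    tendsto_atTop_of_hasDerivWithinAt_ge (t₀ := 0) (f' := fun x ↦ f' (-x)) hc
      (fun x _ ↦ (((hf (-x)).scomp x (hasDerivAt_neg x)).neg.congr_deriv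
        (by simp)).hasDerivWithinAt) (.of_forall fun x ↦ hf' (-x))
  have hbot : Tendsto f atBot atBot := by
    simpa [Function.comp_def] using tendsto_neg_atTop_atBot.comp (hneg.comp tendsto_neg_atBot_atTop)
  exact hcont.surjective htop hbot

lemma exists_pos_forall_le_of_tendsto_atTop {f : ℝ → ℝ} {t₀ : ℝ} (hf : ContinuousOn f (Ici t₀))
    (hpos : ∀ t ∈ Ici t₀, 0 < f t) (hlim : Tendsto f atTop atTop) :
    ∃ m > 0, ∀ t ∈ Ici t₀, m ≤ f t := by
  obtain ⟨S, hS⟩ := eventually_atTop.1 (hlim.eventually_ge_atTop 1)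
  obtain ⟨x, hx, hmin⟩ := isCompact_Icc.exists_isMinOn (nonempty_Icc.2 (le_max_left t₀ S))
    (hf.mono Icc_subset_Ici_self)
  refine ⟨min (f x) 1, lt_min (hpos x hx.1) one_pos, fun t ht ↦ ?_⟩
  rcases le_total t (max t₀ S) with h | h
  · exact (min_le_left _ _).trans (hmin ⟨ht, h⟩)
  · exact (min_le_right _ _).trans (hS t ((le_max_right _ _).trans h))

lemma hasDerivWithinAt_triple_iff {Y : ℝ → ℝ × ℝ × ℝ} {y : ℝ × ℝ × ℝ} {s : Set ℝ} {t : ℝ} :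
    HasDerivWithinAt Y y s t ↔ HasDerivWithinAt (fun t ↦ (Y t).1) y.1 s t ∧
      HasDerivWithinAt (fun t ↦ (Y t).2.1) y.2.1 s t ∧
      HasDerivWithinAt (fun t ↦ (Y t).2.2) y.2.2 s t := by
  refine ⟨fun h ↦ ?_, fun ⟨h₁, h₂, h₃⟩ ↦ h₁.prodMk (h₂.prodMk h₃)⟩
  have h₂ : HasDerivWithinAt (fun t ↦ (Y t).2) y.2 s t := by
    simpa using h.hasFDerivWithinAt.snd.hasDerivWithinAt
  exact ⟨by simpa using h.hasFDerivWithinAt.fst.hasDerivWithinAt,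
    by simpa using h₂.hasFDerivWithinAt.fst.hasDerivWithinAt,
    by simpa using h₂.hasFDerivWithinAt.snd.hasDerivWithinAt⟩

/-- The first-order system for the jet `(H, H', H'')` of a solution of `H''' = f(t, H)`. -/
def jetField (f : ℝ → ℝ → ℝ) (t : ℝ) (y : ℝ × ℝ × ℝ) : ℝ × ℝ × ℝ :=
  (y.2.1, y.2.2, f t y.1)

variable {f : ℝ → ℝ → ℝ} {Y : ℝ → ℝ × ℝ × ℝ} {s : Set ℝ}

lemma isIntegralCurveOn_jetField_iff : IsIntegralCurveOn Y (jetField f) s ↔ ∀ t ∈ s,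
    HasDerivWithinAt (fun t ↦ (Y t).1) (Y t).2.1 s t ∧
    HasDerivWithinAt (fun t ↦ (Y t).2.1) (Y t).2.2 s t ∧
    HasDerivWithinAt (fun t ↦ (Y t).2.2) (f t (Y t).1) s t :=
  forall₂_congr fun _ _ ↦ hasDerivWithinAt_triple_iff

lemma lipschitzWith_jetField {K : ℝ≥0} {t : ℝ} (hf : LipschitzWith K (f t)) :
    LipschitzWith (max 1 K) (jetField f t) := by
  have hfst : LipschitzWith 1 (Prod.fst : ℝ × ℝ × ℝ → ℝ) := .prod_fst
  have hsnd : LipschitzWith 1 (Prod.snd : ℝ × ℝ × ℝ → ℝ × ℝ) := .prod_snd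
  have := (LipschitzWith.prod_fst.comp hsnd).prodMk
    ((LipschitzWith.prod_snd.comp hsnd).prodMk (hf.comp hfst))
  rwa [mul_one, mul_one, ← max_assoc, max_self] at this

lemma tendsto_atTop_of_isIntegralCurveOn_jetField {t₀ : ℝ}
    (hY : IsIntegralCurveOn Y (jetField f) (Ici t₀)) (hf : ∀ᶠ t in atTop, 1 ≤ f t (Y t).1) :
    Tendsto (fun t ↦ (Y t).1) atTop atTop ∧ Tendsto (fun t ↦ (Y t).2.1) atTop atTop ∧
      Tendsto (fun t ↦ (Y t).2.2) atTop atTop := by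
  rw [isIntegralCurveOn_jetField_iff] at hY
  have h₃ := tendsto_atTop_of_hasDerivWithinAt_ge one_pos (fun t ht ↦ (hY t ht).2.2) hf
  have h₂ := tendsto_atTop_of_hasDerivWithinAt_ge one_pos (fun t ht ↦ (hY t ht).2.1)
    (h₃.eventually_ge_atTop 1)
  exact ⟨tendsto_atTop_of_hasDerivWithinAt_ge one_pos (fun t ht ↦ (hY t ht).1)
    (h₂.eventually_ge_atTop 1), h₂, h₃⟩

lemma monotoneOn_of_isIntegralCurveOn_jetField {t₀ S : ℝ} (hS : t₀ ≤ S)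
    (hY : IsIntegralCurveOn Y (jetField f) (Ici t₀)) (hf : ∀ t ≥ S, 0 ≤ f t (Y t).1)
    (h₁ : 0 ≤ (Y S).2.1) (h₂ : 0 ≤ (Y S).2.2) : MonotoneOn (fun t ↦ (Y t).1) (Ici S) := by
  rw [isIntegralCurveOn_jetField_iff] at hY
  have mono₂ := monotoneOn_Ici_of_hasDerivWithinAt_nonneg hS (fun t ht ↦ (hY t ht).2.2) hf
  have mono₁ := monotoneOn_Ici_of_hasDerivWithinAt_nonneg hS (fun t ht ↦ (hY t ht).2.1)
    (fun t ht ↦ h₂.trans (mono₂ self_mem_Ici ht ht))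
  exact monotoneOn_Ici_of_hasDerivWithinAt_nonneg hS (fun t ht ↦ (hY t ht).1)
    (fun t ht ↦ h₁.trans (mono₁ self_mem_Ici ht ht))

end Growth

/-- The right-hand side of `H''' = (e - s)² + a - 1 / H³`, the equation that system (D) becomes for
`H = Φ (cos θ) ^ (2 / 3)` as a function of `s = e - tan θ`, where `e = tan (θ 0)`. -/
noncomputable def reducedRHS (a e s x : ℝ) : ℝ := (e - s) ^ 2 + a - 1 / x ^ 3

/-- `reducedRHS` with the singularity at `x = 0` removed by freezing the argument below `ε`; it is
globally Lipschitz in `x` when `0 < ε`. -/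
noncomputable def truncatedRHS (ε a e s x : ℝ) : ℝ := reducedRHS a e s (max x ε)

lemma lipschitzOnWith_one_div_pow_Ici {ε : ℝ} (hε : 0 < ε) (n : ℕ) :
    LipschitzOnWith (n / ε ^ (n + 1)).toNNReal (fun x : ℝ ↦ 1 / x ^ n) (Ici ε) := by
  refine (convex_Ici ε).lipschitzOnWith_of_nnnorm_hasDerivWithin_le (𝕜 := ℝ)
    (f' := fun x : ℝ ↦ -((n : ℝ) / x ^ (n + 1))) (fun x hx ↦ ?_) (fun x hx ↦ ?_)
  all_goals have hx₀ : 0 < x := hε.trans_le hx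
  · simp only [one_div]
    refine ((hasDerivAt_pow n x).fun_inv (by positivity)).hasDerivWithinAt.congr_deriv ?_
    rcases n with - | n
    · simp
    · simp only [Nat.add_one_sub_one]
      field_simp
      ring
  · rw [nnnorm_neg, ← NNReal.coe_le_coe, coe_nnnorm, Real.norm_of_nonneg (by positivity),
      Real.coe_toNNReal _ (by positivity)]
    have : ε ≤ x := hx
    gcongr

lemma exists_lipschitzWith_truncatedRHS {ε : ℝ} (hε : 0 < ε) (a : ℝ) :
    ∃ K, ∀ e s, LipschitzWith K (truncatedRHS ε a e s) := by
  have hcut := (lipschitzOnWith_one_div_pow_Ici hε 3).comp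
    ((LipschitzWith.id.max_const ε).lipschitzOnWith (s := univ)) fun x _ ↦ le_max_right x ε
  exact ⟨_, fun e s ↦ (LipschitzWith.const ((e - s) ^ 2 + a)).sub (lipschitzOnWith_univ.1 hcut)⟩

lemma truncatedRHS_of_le {ε a e s x : ℝ} (hx : ε ≤ x) :
    truncatedRHS ε a e s x = reducedRHS a e s x := by
  rw [truncatedRHS, max_eq_left hx]

lemma one_le_truncatedRHS {ε a e s : ℝ} (hε : 0 < ε) (hs : e + |a| + 1 / ε ^ 3 + 1 ≤ s) (x : ℝ) :
    1 ≤ truncatedRHS ε a e s x := by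
  have hcut : 1 / max x ε ^ 3 ≤ 1 / ε ^ 3 := by gcongr; exact le_max_right x ε
  have hinv : 0 < 1 / ε ^ 3 := by positivity
  rw [truncatedRHS, reducedRHS]
  nlinarith [abs_nonneg a, neg_abs_le a]

lemma eventually_one_le_reducedRHS {e : ℝ} {H : ℝ → ℝ} (a : ℝ) (hpos : ∀ s ≥ 0, 0 < H s)
    (hlim : Tendsto (fun s ↦ H s ^ 3 * (1 + (e - s) ^ 2)) atTop atTop) :
    ∀ᶠ s in atTop, 1 ≤ reducedRHS a e s (H s) := by
  filter_upwards [hlim.eventually_ge_atTop 2, eventually_ge_atTop (e + 2 * |a| + 3),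
    eventually_ge_atTop 0] with s h₂ hs hs₀
  have := hpos s hs₀
  have hinv : 1 / H s ^ 3 ≤ (1 + (e - s) ^ 2) / 2 := by
    rw [div_le_div_iff₀ (by positivity) two_pos]; linarith
  rw [reducedRHS]
  nlinarith [abs_nonneg a, neg_abs_le a]

section Stability

variable {a e ε : ℝ} {Y Z : ℝ → ℝ × ℝ × ℝ}

lemma isIntegralCurveOn_truncatedRHS_iff {s : Set ℝ} (hε : ∀ t ∈ s, ε ≤ (Y t).1) :
    IsIntegralCurveOn Y (jetField (truncatedRHS ε a e)) s ↔
      IsIntegralCurveOn Y (jetField (reducedRHS a e)) s :=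
  forall₂_congr fun t ht ↦ by rw [jetField, jetField, truncatedRHS_of_le (hε t ht)]

lemma exists_isIntegralCurve_truncatedRHS (hε : 0 < ε) (a e : ℝ) (z : ℝ × ℝ × ℝ) :
    ∃ Z, Z 0 = z ∧ IsIntegralCurve Z (jetField (truncatedRHS ε a e)) := by
  obtain ⟨K, hK⟩ := exists_lipschitzWith_truncatedRHS hε a
  exact exists_isIntegralCurve_of_lipschitzWith (fun t ↦ lipschitzWith_jetField (hK e t))
    (fun y ↦ by unfold jetField truncatedRHS reducedRHS; fun_prop) 0 z

lemma eventually_dist_truncatedRHS_le (ε a e S : ℝ) {δ : ℝ} (hδ : 0 < δ) :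
    ∀ᶠ e' in 𝓝 e, ∀ t ∈ Icc 0 S, ∀ x,
      dist (truncatedRHS ε a e' t x) (truncatedRHS ε a e t x) ≤ δ := by
  refine isCompact_Icc.eventually_forall_of_forall_eventually fun t _ ↦ ?_
  have hcont : Continuous fun z : ℝ × ℝ ↦ dist ((z.1 - z.2) ^ 2) ((e - z.2) ^ 2) := by fun_prop
  filter_upwards [hcont.continuousAt.eventually_lt_const (by simpa using hδ)] with z hz x
  simpa [truncatedRHS, reducedRHS] using hz.le

lemma eventually_forall_dist_lt_of_truncatedRHS (hε : 0 < ε) {S η : ℝ} (hη : 0 < η)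
    (hY : IsIntegralCurveOn Y (jetField (truncatedRHS ε a e)) (Icc 0 S)) :
    ∀ᶠ p : ℝ × ℝ × ℝ × ℝ in 𝓝 (e, Y 0), ∀ Z, Z 0 = p.2 →
      IsIntegralCurveOn Z (jetField (truncatedRHS ε a p.1)) (Icc 0 S) →
      ∀ t ∈ Icc 0 S, dist (Y t) (Z t) < η := by
  obtain ⟨K, hK⟩ := exists_lipschitzWith_truncatedRHS hε a
  obtain ⟨δ, hδ, hclose⟩ :=
    exists_pos_forall_dist_lt_of_isIntegralCurveOn (E := ℝ × ℝ × ℝ) (max 1 K) S hη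
  filter_upwards [continuousAt_fst.eventually (eventually_dist_truncatedRHS_le ε a e S hδ),
    continuousAt_snd.eventually (Metric.closedBall_mem_nhds _ hδ)] with p hp₁ hp₂ Z hZ₀ hZ
  refine hclose (fun t ↦ lipschitzWith_jetField (hK e t)) hY hZ ?_ fun t ht ↦ ?_
  · rwa [hZ₀, dist_comm]
  · simpa [jetField, Prod.dist_eq, hδ.le] using hp₁ t ht (Z t).1

lemma le_of_dist_lt_of_truncatedRHS {S : ℝ} (hε : 0 < ε) (hε₁ : ε ≤ 1) (hS : 0 ≤ S)
    (hSe : e + |a| + 1 / ε ^ 3 + 1 ≤ S)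
    (hZ : IsIntegralCurveOn Z (jetField (truncatedRHS ε a e)) (Ici 0))
    (hY : ∀ t ∈ Icc 0 S, 2 * ε ≤ (Y t).1) (hYS₁ : 1 ≤ (Y S).2.1) (hYS₂ : 1 ≤ (Y S).2.2)
    (hdist : ∀ t ∈ Icc 0 S, dist (Y t) (Z t) < ε) {t : ℝ} (ht : 0 ≤ t) : ε ≤ (Z t).1 := by
  have fst_le : ∀ t ∈ Icc 0 S, ε ≤ (Z t).1 := fun t ht ↦ by
    have := (abs_lt.1 ((le_max_left _ _).trans_lt (hdist t ht))).2
    linarith [hY t ht]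
  have hS' := max_lt_iff.1 ((le_max_right _ _).trans_lt (hdist S ⟨hS, le_rfl⟩))
  have mono := monotoneOn_of_isIntegralCurveOn_jetField hS hZ
    (fun t ht ↦ zero_le_one.trans (one_le_truncatedRHS hε (hSe.trans ht) _))
    (by linarith [(abs_lt.1 hS'.1).2]) (by linarith [(abs_lt.1 hS'.2).2])
  rcases le_total t S with h | h
  · exact fst_le t ⟨ht, h⟩
  · exact (fst_le S ⟨hS, le_rfl⟩).trans (mono self_mem_Ici h h)

theorem eventually_exists_isIntegralCurveOn_reducedRHS
    (hY : IsIntegralCurveOn Y (jetField (reducedRHS a e)) (Ici 0)) (hpos : ∀ s ≥ 0, 0 < (Y s).1)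
    (hlim : Tendsto (fun s ↦ (Y s).1 ^ 3 * (1 + (e - s) ^ 2)) atTop atTop) :
    ∀ᶠ p : ℝ × ℝ × ℝ × ℝ in 𝓝 (e, Y 0), ∃ Z, Z 0 = p.2 ∧
      IsIntegralCurveOn Z (jetField (reducedRHS a p.1)) (Ici 0) ∧ (∀ s ≥ 0, 0 < (Z s).1) ∧
      Tendsto (fun s ↦ (Z s).1) atTop atTop := by
  obtain ⟨hlim₀, hlim₁, hlim₂⟩ := tendsto_atTop_of_isIntegralCurveOn_jetField hY
    (eventually_one_le_reducedRHS a hpos hlim)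
  obtain ⟨m, hm, hmY⟩ := exists_pos_forall_le_of_tendsto_atTop (f := fun s ↦ (Y s).1)
    (continuous_fst.comp_continuousOn hY.continuousOn) hpos hlim₀
  obtain ⟨ε, hε, hε₁, hεm⟩ : ∃ ε > 0, ε ≤ 1 ∧ 2 * ε ≤ m :=
    ⟨min 1 (m / 2), by positivity, min_le_left _ _, by linarith [min_le_right 1 (m / 2)]⟩
  have hεY : ∀ s ∈ Ici 0, ε ≤ (Y s).1 := fun s hs ↦ by linarith [hmY s hs]
  obtain ⟨S, hS, hSe, hYS₁, hYS₂⟩ : ∃ S : ℝ, 0 ≤ S ∧ e + 1 + |a| + 1 / ε ^ 3 + 1 ≤ S ∧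
      1 ≤ (Y S).2.1 ∧ 1 ≤ (Y S).2.2 :=
    ((eventually_ge_atTop _).and ((eventually_ge_atTop _).and ((hlim₁.eventually_ge_atTop 1).and
      (hlim₂.eventually_ge_atTop 1)))).exists
  have hclose := eventually_forall_dist_lt_of_truncatedRHS hε hε
    (((isIntegralCurveOn_truncatedRHS_iff hεY).2 hY).mono (s' := Icc 0 S) Icc_subset_Ici_self)
  filter_upwards [hclose, continuousAt_fst.eventually_lt_const (lt_add_one e)] with p hp hpe
  obtain ⟨Z, hZ₀, hZ⟩ := exists_isIntegralCurve_truncatedRHS hε a p.1 p.2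
  have hεZ : ∀ s ∈ Ici 0, ε ≤ (Z s).1 := fun s hs ↦
    le_of_dist_lt_of_truncatedRHS hε hε₁ hS (by linarith) (hZ.isIntegralCurveOn _)
      (fun t ht ↦ hεm.trans (hmY t ht.1)) hYS₁ hYS₂ (hp Z hZ₀ (hZ.isIntegralCurveOn _)) hs
  refine ⟨Z, hZ₀, (isIntegralCurveOn_truncatedRHS_iff hεZ).1 (hZ.isIntegralCurveOn _),
    fun s hs ↦ hε.trans_le (hεZ s hs), (tendsto_atTop_of_isIntegralCurveOn_jetField
      (hZ.isIntegralCurveOn (Ici 0)) ?_).1⟩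
  filter_upwards [eventually_ge_atTop S] with s hs
  exact one_le_truncatedRHS hε (by linarith) _

end Stability

/-- `cosWeight ξ = (cos θ) ^ (2 / 9)` for `ξ = tan θ`: all powers of `cos θ` that occur in system
(D) and in the change of variables below are integral powers of this function. -/
noncomputable def cosWeight (ξ : ℝ) : ℝ := (1 + ξ ^ 2) ^ (-(1 / 9) : ℝ)

lemma cosWeight_pos (ξ : ℝ) : 0 < cosWeight ξ := by
  unfold cosWeight; positivity

lemma cosWeight_ne_zero (ξ : ℝ) : cosWeight ξ ≠ 0 := (cosWeight_pos ξ).ne'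

lemma cosWeight_le_one (ξ : ℝ) : cosWeight ξ ≤ 1 :=
  Real.rpow_le_one_of_one_le_of_nonpos (by nlinarith [sq_nonneg ξ]) (by norm_num)

lemma cosWeight_pow (ξ : ℝ) (n : ℕ) : cosWeight ξ ^ n = (1 + ξ ^ 2) ^ (-(n / 9) : ℝ) := by
  rw [cosWeight, ← Real.rpow_natCast, ← Real.rpow_mul (by positivity)]
  congr 1
  ring

lemma cosWeight_pow_nine_mul (ξ : ℝ) : cosWeight ξ ^ 9 * (1 + ξ ^ 2) = 1 := by
  have : 0 < 1 + ξ ^ 2 := by positivity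
  rw [cosWeight_pow, Nat.cast_ofNat, div_self (by norm_num), Real.rpow_neg_one,
    inv_mul_cancel₀ this.ne']

lemma hasDerivAt_cosWeight (ξ : ℝ) :
    HasDerivAt cosWeight (-(2 / 9) * ξ * cosWeight ξ ^ 10) ξ := by
  have hsq : HasDerivAt (fun ξ : ℝ ↦ 1 + ξ ^ 2) (2 * ξ) ξ := by
    simpa using (hasDerivAt_pow 2 ξ).const_add 1
  refine (hsq.rpow_const (p := -(1 / 9)) (.inl (by positivity))).congr_deriv ?_
  rw [cosWeight_pow, show (-((10 : ℕ) / 9) : ℝ) = -(1 / 9) - 1 by norm_num]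
  ring

lemma continuous_cosWeight : Continuous cosWeight :=
  continuous_iff_continuousAt.2 fun ξ ↦ (hasDerivAt_cosWeight ξ).continuousAt

lemma cos_arctan_rpow (ξ : ℝ) {r : ℝ} {n : ℕ} (hr : r = 2 * n / 9) :
    Real.cos (Real.arctan ξ) ^ r = cosWeight ξ ^ n := by
  rw [cosWeight_pow, Real.cos_arctan, Real.sqrt_eq_rpow, one_div, ← Real.rpow_neg (by positivity),
    ← Real.rpow_mul (by positivity), hr]
  congr 1
  ring

lemma cos_arctan_sq (ξ : ℝ) : Real.cos (Real.arctan ξ) ^ 2 = cosWeight ξ ^ 9 := by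
  rw [← cos_arctan_rpow ξ (r := 2) (by norm_num), Real.rpow_two]

lemma dPsi_arctan (a Φ W Ψ ξ : ℝ) : dPsi a Φ W Ψ (Real.arctan ξ) =
    1 / Φ ^ 3 - 1 - (a - 1) * cosWeight ξ ^ 9 -
      (((16 / 3) * ξ * cosWeight ξ ^ 30 - (224 / 27) * ξ ^ 3 * cosWeight ξ ^ 39) * Φ
        + ((208 / 81) * ξ ^ 2 * cosWeight ξ ^ 9 - 10 / 9) * cosWeight ξ ^ 17 * W
        + (2 / 3) * ξ * cosWeight ξ ^ 13 * Ψ) := by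
  have hcos := (Real.cos_arctan_pos ξ).ne'
  have hsin : Real.sin (Real.arctan ξ) = ξ * Real.cos (Real.arctan ξ) := by
    rw [Real.sin_arctan, Real.cos_arctan, mul_one_div]
  have hΦ : Real.cos (Real.arctan ξ) ^ ((17 : ℝ) / 3) * Real.cos (Real.arctan ξ) =
      cosWeight ξ ^ 30 := by
    rw [← Real.rpow_add_one hcos, cos_arctan_rpow ξ (n := 30) (by norm_num)]
  have hΨ : Real.cos (Real.arctan ξ) ^ ((17 : ℝ) / 9) * Real.cos (Real.arctan ξ) =
      cosWeight ξ ^ 13 := by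
    rw [← Real.rpow_add_one hcos, cos_arctan_rpow ξ (n := 13) (by norm_num)]
  rw [dPsi, hsin, cos_arctan_rpow ξ (r := 34 / 9) (n := 17) (by norm_num), cos_arctan_sq,
    show cosWeight ξ ^ 39 = cosWeight ξ ^ 30 * cosWeight ξ ^ 9 by ring, ← cos_arctan_sq, ← hΦ, ← hΨ]
  ring

lemma hasDerivAt_integral_cosWeight (ξ : ℝ) :
    HasDerivAt (fun ξ ↦ ∫ u in 0..ξ, (cosWeight u ^ 4)⁻¹) (cosWeight ξ ^ 4)⁻¹ ξ := by
  have hcont : Continuous fun u ↦ (cosWeight u ^ 4)⁻¹ :=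
    (continuous_cosWeight.pow 4).inv₀ fun u ↦ pow_ne_zero _ (cosWeight_ne_zero u)
  exact hcont.integral_hasStrictDerivAt 0 ξ |>.hasDerivAt

lemma one_le_inv_cosWeight_pow (ξ : ℝ) (n : ℕ) : 1 ≤ (cosWeight ξ ^ n)⁻¹ :=
  (one_le_inv₀ (pow_pos (cosWeight_pos ξ) n)).2
    (pow_le_one₀ (cosWeight_pos ξ).le (cosWeight_le_one ξ))

/-- The time `τ` as a function of `ξ = tan θ` along solutions of `θ' = (cos θ) ^ (26 / 9)`,
normalized by `clock 0 = 0`. -/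
noncomputable def clock : ℝ ≃o ℝ :=
  StrictMono.orderIsoOfSurjective (fun ξ ↦ ∫ u in 0..ξ, (cosWeight u ^ 4)⁻¹)
    (strictMono_of_hasDerivAt_pos hasDerivAt_integral_cosWeight
      fun ξ ↦ inv_pos.2 (pow_pos (cosWeight_pos ξ) 4))
    (surjective_of_hasDerivAt_ge one_pos hasDerivAt_integral_cosWeight
      fun ξ ↦ one_le_inv_cosWeight_pow ξ 4)

lemma hasDerivAt_clock (ξ : ℝ) : HasDerivAt clock (cosWeight ξ ^ 4)⁻¹ ξ :=
  hasDerivAt_integral_cosWeight ξ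

lemma hasDerivAt_clock_symm (τ : ℝ) :
    HasDerivAt clock.symm (cosWeight (clock.symm τ) ^ 4) τ := by
  simpa using (hasDerivAt_clock (clock.symm τ)).of_local_left_inverse
    clock.symm.continuous.continuousAt
    (inv_ne_zero (pow_ne_zero 4 (cosWeight_ne_zero (clock.symm τ))))
    (.of_forall clock.apply_symm_apply)

lemma clock_tan_sub_clock_tan {θ : ℝ → ℝ} {s : Set ℝ} (hs : Convex ℝ s)
    (hθ' : ∀ τ ∈ s, HasDerivWithinAt θ (Real.cos (θ τ) ^ ((26 : ℝ) / 9)) s τ)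
    (hθ : ∀ τ ∈ s, θ τ ∈ Ioo (-(Real.pi / 2)) (Real.pi / 2)) {σ τ : ℝ} (hσ : σ ∈ s) (hτ : τ ∈ s) :
    clock (Real.tan (θ τ)) - clock (Real.tan (θ σ)) = τ - σ := by
  have hderiv : ∀ τ ∈ s, HasDerivWithinAt (fun τ ↦ clock (Real.tan (θ τ)) - τ) 0 s τ := by
    intro τ hτ
    have hcos := (Real.cos_pos_of_mem_Ioo (hθ τ hτ)).ne'
    refine (((hasDerivAt_clock (Real.tan (θ τ))).comp_hasDerivWithinAt τ
      ((Real.hasDerivAt_tan hcos).comp_hasDerivWithinAt τ (hθ' τ hτ))).sub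
      (hasDerivWithinAt_id τ s)).congr_deriv ?_
    have harctan := Real.arctan_tan (hθ τ hτ).1 (hθ τ hτ).2
    have := cosWeight_ne_zero (Real.tan (θ τ))
    generalize Real.tan (θ τ) = ξ at *
    rw [← harctan, cos_arctan_sq, cos_arctan_rpow ξ (n := 13) (by norm_num)]
    field_simp
    norm_num
  have h := hs.norm_image_sub_le_of_norm_hasDerivWithin_le (C := 0) hderiv (by simp) hσ hτ
  rw [zero_mul, norm_le_zero_iff] at h
  linarith

/-- The jet `(H, H', H'')` of `H = Φ (cos θ) ^ (2 / 3)` with respect to `s`, where `ds = -dξ`, in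
terms of `ξ = tan θ` and the jet `y = (Φ, W, Ψ)` with respect to `τ`. -/
noncomputable def toReduced (ξ : ℝ) (y : ℝ × ℝ × ℝ) : ℝ × ℝ × ℝ :=
  (y.1 * cosWeight ξ ^ 3,
    (2 / 3) * ξ * y.1 * cosWeight ξ ^ 12 - y.2.1 * (cosWeight ξ)⁻¹,
    y.2.2 * (cosWeight ξ)⁻¹ ^ 5 - (4 / 9) * ξ * y.2.1 * cosWeight ξ ^ 8
      - (2 / 3) * y.1 * cosWeight ξ ^ 12 + (16 / 9) * ξ ^ 2 * y.1 * cosWeight ξ ^ 21)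

/-- The inverse change of variables: the jet `(Φ, W, Ψ)` with respect to `τ` in terms of
`ξ = tan θ` and the jet `z = (H, H', H'')` with respect to `s`. -/
noncomputable def ofReduced (ξ : ℝ) (z : ℝ × ℝ × ℝ) : ℝ × ℝ × ℝ :=
  (z.1 * (cosWeight ξ)⁻¹ ^ 3,
    (2 / 3) * ξ * z.1 * cosWeight ξ ^ 10 - z.2.1 * cosWeight ξ,
    z.2.2 * cosWeight ξ ^ 5 - (4 / 9) * ξ * z.2.1 * cosWeight ξ ^ 14
      + (2 / 3) * z.1 * cosWeight ξ ^ 14 - (40 / 27) * ξ ^ 2 * z.1 * cosWeight ξ ^ 23)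

lemma ofReduced_toReduced (ξ : ℝ) (y : ℝ × ℝ × ℝ) : ofReduced ξ (toReduced ξ y) = y := by
  have := cosWeight_ne_zero ξ
  simp only [ofReduced, toReduced, Prod.ext_iff]
  refine ⟨?_, ?_, ?_⟩ <;> field_simp <;> ring

lemma continuous_toReduced : Continuous fun p : ℝ × ℝ × ℝ × ℝ ↦ toReduced p.1 p.2 := by
  have := continuous_cosWeight
  unfold toReduced
  fun_prop (disch := exact fun _ ↦ cosWeight_ne_zero _)

lemma isIntegralCurveOn_toReduced {a e : ℝ} {Φ W Ψ θ T : ℝ → ℝ} {s u : Set ℝ}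
    (hsol : SolDOn a u Φ W Ψ θ) (hTu : MapsTo T s u) (hpos : ∀ τ ∈ u, 0 < Φ τ)
    (hT : ∀ t ∈ s, HasDerivWithinAt T (-(cosWeight (e - t) ^ 4)⁻¹) s t)
    (hθ : ∀ t ∈ s, θ (T t) = Real.arctan (e - t)) :
    IsIntegralCurveOn (fun t ↦ toReduced (e - t) (Φ (T t), W (T t), Ψ (T t)))
      (jetField (reducedRHS a e)) s := by
  refine isIntegralCurveOn_jetField_iff.2 fun t ht ↦ ?_
  obtain ⟨hΦ, hW, hΨ, -⟩ := hsol (T t) (hTu ht)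
  replace hΦ := hΦ.comp t (hT t ht) hTu
  replace hW := hW.comp t (hT t ht) hTu
  replace hΨ := hΨ.comp t (hT t ht) hTu
  have hX : HasDerivWithinAt (fun t ↦ e - t) (-1) s t := (hasDerivWithinAt_id t s).const_sub e
  have hw : HasDerivWithinAt (fun t ↦ cosWeight (e - t)) ((2 / 9) * (e - t) *
      cosWeight (e - t) ^ 10) s t :=
    ((hasDerivAt_cosWeight (e - t)).comp_hasDerivWithinAt t hX).congr_deriv (by ring)
  have hw₀ := cosWeight_ne_zero (e - t)
  have hΦ₀ := (hpos _ (hTu ht)).ne'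
  have hwinv : (cosWeight (e - t))⁻¹ ^ 9 = 1 + (e - t) ^ 2 := by
    field_simp
    linear_combination -cosWeight_pow_nine_mul (e - t)
  refine ⟨(hΦ.mul (hw.pow 3)).congr_deriv ?_, ((((hX.const_mul (2 / 3)).mul hΦ).mul
    (hw.pow 12)).sub (hW.mul (hw.inv hw₀))).congr_deriv ?_,
    ((((hΨ.mul ((hw.inv hw₀).pow 5)).sub (((hX.const_mul (4 / 9)).mul hW).mul (hw.pow 8))).sub
      ((hΦ.const_mul (2 / 3)).mul (hw.pow 12))).add
      ((((hX.pow 2).const_mul (16 / 9)).mul hΦ).mul (hw.pow 21))).congr_deriv ?_⟩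
  · simp only [toReduced, Pi.pow_apply, Function.comp_apply]
    field_simp
    ring
  · simp only [toReduced, Pi.pow_apply, Pi.mul_apply, Pi.inv_apply, Function.comp_apply]
    field_simp
    ring
  · rw [hθ t ht, dPsi_arctan]
    simp only [toReduced, reducedRHS, Pi.pow_apply, Pi.mul_apply, Pi.inv_apply,
      Function.comp_apply]
    push_cast
    linear_combination (norm := (field_simp; ring)) hwinv

lemma solDOn_ofReduced {a e : ℝ} {X : ℝ → ℝ} {Y : ℝ → ℝ × ℝ × ℝ} {s : Set ℝ}
    (hX : ∀ τ ∈ s, HasDerivWithinAt X (cosWeight (X τ) ^ 4) s τ) (hpos : ∀ τ ∈ s, 0 < (Y τ).1)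
    (hY : ∀ τ ∈ s, HasDerivWithinAt Y
      (-(cosWeight (X τ) ^ 4) • jetField (reducedRHS a e) (e - X τ) (Y τ)) s τ) :
    SolDOn a s (fun τ ↦ (ofReduced (X τ) (Y τ)).1) (fun τ ↦ (ofReduced (X τ) (Y τ)).2.1)
      (fun τ ↦ (ofReduced (X τ) (Y τ)).2.2) (fun τ ↦ Real.arctan (X τ)) := by
  intro τ hτ
  obtain ⟨hH, hP, hQ⟩ := hasDerivWithinAt_triple_iff.1 (hY τ hτ)
  simp only [jetField, reducedRHS, Prod.smul_fst, Prod.smul_snd, smul_eq_mul,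
    sub_sub_cancel] at hH hP hQ
  specialize hX τ hτ
  have hw : HasDerivWithinAt (fun τ ↦ cosWeight (X τ)) (-(2 / 9) * X τ * cosWeight (X τ) ^ 14) s
      τ := ((hasDerivAt_cosWeight (X τ)).comp_hasDerivWithinAt τ hX).congr_deriv (by ring)
  have hw₀ := cosWeight_ne_zero (X τ)
  have hw₉ := cosWeight_pow_nine_mul (X τ)
  have hH₀ := (hpos τ hτ).ne'
  refine ⟨(hH.mul ((hw.inv hw₀).pow 3)).congr_deriv ?_, ((((hX.const_mul (2 / 3)).mul hH).mul
    (hw.pow 10)).sub (hP.mul hw)).congr_deriv ?_,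
    ((((hQ.mul (hw.pow 5)).sub (((hX.const_mul (4 / 9)).mul hP).mul (hw.pow 14))).add
      ((hH.const_mul (2 / 3)).mul (hw.pow 14))).sub
      ((((hX.pow 2).const_mul (40 / 27)).mul hH).mul (hw.pow 23))).congr_deriv ?_,
    hX.arctan.congr_deriv ?_⟩
  · simp only [ofReduced, Pi.inv_apply, Pi.pow_apply, Nat.reduceSub]
    field_simp
    ring
  · simp only [ofReduced, Pi.mul_apply, Pi.pow_apply]
    ring
  · rw [dPsi_arctan]
    simp only [ofReduced, Pi.mul_apply, Pi.pow_apply]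
    push_cast
    linear_combination (norm := (field_simp; ring)) (-1 : ℝ) * hw₉
  · rw [cos_arctan_rpow _ (n := 13) (by norm_num)]
    have : 1 + X τ ^ 2 ≠ 0 := by positivity
    field_simp
    linear_combination -hw₉

theorem exists_isIntegralCurveOn_reducedRHS_of_solDOn {a : ℝ} {Φ W Ψ θ : ℝ → ℝ}
    (hsol : SolDOn a (Iic 0) Φ W Ψ θ) (hpos : ∀ τ ≤ (0 : ℝ), 0 < Φ τ)
    (hθ : ∀ τ ≤ (0 : ℝ), θ τ ∈ Ioo (-(Real.pi / 2)) (Real.pi / 2)) (hlim : Tendsto Φ atBot atTop) :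
    ∃ Y, Y 0 = toReduced (Real.tan (θ 0)) (Φ 0, W 0, Ψ 0) ∧
      IsIntegralCurveOn Y (jetField (reducedRHS a (Real.tan (θ 0)))) (Ici 0) ∧
      (∀ s ≥ 0, 0 < (Y s).1) ∧
      Tendsto (fun s ↦ (Y s).1 ^ 3 * (1 + (Real.tan (θ 0) - s) ^ 2)) atTop atTop := by
  set e := Real.tan (θ 0)
  let T : ℝ → ℝ := fun s ↦ clock (e - s) - clock e
  have hTmaps : MapsTo T (Ici 0) (Iic 0) := fun s hs ↦
    sub_nonpos.2 (clock.monotone (sub_le_self e hs))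
  have hT : ∀ s, HasDerivAt T (-(cosWeight (e - s) ^ 4)⁻¹) s := fun s ↦
    ((hasDerivAt_clock (e - s)).comp_const_sub e s).sub_const _
  have hTθ : ∀ s ∈ Ici 0, θ (T s) = Real.arctan (e - s) := fun s hs ↦ by
    have hclock := clock_tan_sub_clock_tan (convex_Iic 0) (fun τ hτ ↦ (hsol τ hτ).2.2.2) hθ
      self_mem_Iic (hTmaps hs)
    rw [← clock.injective (by linarith : clock (Real.tan (θ (T s))) = clock (e - s)),
      Real.arctan_tan (hθ _ (hTmaps hs)).1 (hθ _ (hTmaps hs)).2]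
  have hTlim : Tendsto T atTop atBot := tendsto_atBot_add_const_right _ _
    (clock.tendsto_atBot.comp (tendsto_atBot_add_const_left _ e tendsto_neg_atTop_atBot))
  refine ⟨fun s ↦ toReduced (e - s) (Φ (T s), W (T s), Ψ (T s)), by simp [T],
    isIntegralCurveOn_toReduced hsol hTmaps hpos (fun s _ ↦ (hT s).hasDerivWithinAt) hTθ,
    fun s hs ↦ mul_pos (hpos _ (hTmaps hs)) (pow_pos (cosWeight_pos _) 3), ?_⟩
  refine ((tendsto_pow_atTop three_ne_zero).comp (hlim.comp hTlim)).congr fun s ↦ ?_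
  simp only [Function.comp_apply, toReduced]
  linear_combination (-Φ (T s) ^ 3) * cosWeight_pow_nine_mul (e - s)

theorem exists_solDOn_of_isIntegralCurveOn_reducedRHS {a ξ : ℝ} {y : ℝ × ℝ × ℝ}
    {Z : ℝ → ℝ × ℝ × ℝ} (hZ₀ : Z 0 = toReduced ξ y)
    (hZ : IsIntegralCurveOn Z (jetField (reducedRHS a ξ)) (Ici 0)) (hpos : ∀ s ≥ 0, 0 < (Z s).1)
    (hlim : Tendsto (fun s ↦ (Z s).1) atTop atTop) :
    ∃ Φ W Ψ θ : ℝ → ℝ, SolDOn a (Iic 0) Φ W Ψ θ ∧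
      Φ 0 = y.1 ∧ W 0 = y.2.1 ∧ Ψ 0 = y.2.2 ∧ θ 0 = Real.arctan ξ ∧
      (∀ τ ≤ (0 : ℝ), 0 < Φ τ) ∧ Tendsto Φ atBot atTop := by
  let X : ℝ → ℝ := fun τ ↦ clock.symm (τ + clock ξ)
  have hX₀ : X 0 = ξ := by simp [X]
  have hX : ∀ τ, HasDerivAt X (cosWeight (X τ) ^ 4) τ := fun τ ↦
    (hasDerivAt_clock_symm (τ + clock ξ)).comp_add_const τ (clock ξ)
  have hmaps : MapsTo (fun τ ↦ ξ - X τ) (Iic 0) (Ici 0) := fun τ hτ ↦ by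
    have := clock.symm.monotone (add_le_of_nonpos_left hτ : τ + clock ξ ≤ clock ξ)
    rw [clock.symm_apply_apply] at this
    exact sub_nonneg.2 this
  have hslim : Tendsto (fun τ ↦ ξ - X τ) atBot atTop :=
    tendsto_atTop_add_const_left _ ξ (tendsto_neg_atBot_atTop.comp
      (clock.symm.tendsto_atBot.comp (tendsto_atBot_add_const_right _ _ tendsto_id)))
  have hinit : ofReduced (X 0) (Z (ξ - X 0)) = y := by
    rw [hX₀, sub_self, hZ₀, ofReduced_toReduced]
  have hZpos : ∀ τ ∈ Iic 0, 0 < (Z (ξ - X τ)).1 := fun τ hτ ↦ hpos _ (hmaps hτ)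
  refine ⟨_, _, _, _, solDOn_ofReduced (fun τ _ ↦ (hX τ).hasDerivWithinAt) hZpos
    (fun τ hτ ↦ (hZ _ (hmaps hτ)).scomp τ ((hX τ).const_sub ξ).hasDerivWithinAt hmaps),
    by rw [hinit], by rw [hinit], by rw [hinit], by rw [hX₀],
    fun τ hτ ↦ mul_pos (hZpos τ hτ) (pow_pos (inv_pos.2 (cosWeight_pos _)) 3),
    tendsto_atTop_mono' _ ?_ (hlim.comp hslim)⟩
  filter_upwards [eventually_le_atBot 0] with τ hτ
  rw [ofReduced, inv_pow]
  exact le_mul_of_one_le_right (hZpos τ hτ).le (one_le_inv_cosWeight_pow _ 3)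

lemma continuousAt_toReduced_tan {y : ℝ × ℝ × ℝ × ℝ} (hy : Real.cos y.2.2.2 ≠ 0) :
    ContinuousAt (fun y : ℝ × ℝ × ℝ × ℝ ↦
      (Real.tan y.2.2.2, toReduced (Real.tan y.2.2.2) (y.1, y.2.1, y.2.2.1))) y := by
  have htan : ContinuousAt (fun y : ℝ × ℝ × ℝ × ℝ ↦ Real.tan y.2.2.2) y :=
    (Real.continuousAt_tan.2 hy).comp (f := fun y : ℝ × ℝ × ℝ × ℝ ↦ y.2.2.2) (by fun_prop)
  exact htan.prodMk (continuous_toReduced.continuousAt.comp (htan.prodMk (by fun_prop)))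

/-- the behaviour `Φ(τ) → +∞` as `τ → -∞` is stable under small perturbations
of the data at `τ = 0`. -/
theorem stability_blow_up (a : ℝ) (Φ W Ψ θ : ℝ → ℝ)
    (hsol : SolDOn a (Set.Iic 0) Φ W Ψ θ)
    (hΦpos : ∀ τ ≤ (0 : ℝ), 0 < Φ τ)
    (hθ : ∀ τ ≤ (0 : ℝ), θ τ ∈ Set.Ioo (-(Real.pi / 2)) (Real.pi / 2))
    (hinf : Tendsto Φ atBot atTop) :
    ∃ δ > (0 : ℝ), ∀ Φ₀ W₀ Ψ₀ θ₀ : ℝ,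
      dist ((Φ₀, W₀, Ψ₀, θ₀) : ℝ × ℝ × ℝ × ℝ) ((Φ 0, W 0, Ψ 0, θ 0) : ℝ × ℝ × ℝ × ℝ) < δ →
      0 < Φ₀ → θ₀ ∈ Set.Ioo (-(Real.pi / 2)) (Real.pi / 2) →
      ∃ Φt Wt Ψt θt : ℝ → ℝ,
        SolDOn a (Set.Iic 0) Φt Wt Ψt θt ∧
        Φt 0 = Φ₀ ∧ Wt 0 = W₀ ∧ Ψt 0 = Ψ₀ ∧ θt 0 = θ₀ ∧
        (∀ τ ≤ (0 : ℝ), 0 < Φt τ) ∧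
        Tendsto Φt atBot atTop := by
  obtain ⟨Y, hY₀, hY, hYpos, hYlim⟩ :=
    exists_isIntegralCurveOn_reducedRHS_of_solDOn hsol hΦpos hθ hinf
  have hstable := eventually_exists_isIntegralCurveOn_reducedRHS hY hYpos hYlim
  rw [hY₀] at hstable
  have hcont := continuousAt_toReduced_tan (y := (Φ 0, W 0, Ψ 0, θ 0))
    (Real.cos_pos_of_mem_Ioo (hθ 0 le_rfl)).ne'
  obtain ⟨δ, hδ, hball⟩ := Metric.eventually_nhds_iff.1 (hcont.eventually hstable)
  refine ⟨δ, hδ, fun Φ₀ W₀ Ψ₀ θ₀ hdist _ hθ₀ ↦ ?_⟩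
  obtain ⟨Z, hZ₀, hZ, hZpos, hZlim⟩ := hball hdist
  have hZsol := exists_solDOn_of_isIntegralCurveOn_reducedRHS hZ₀ hZ hZpos hZlim
  rwa [Real.arctan_tan hθ₀.1 hθ₀.2] at hZsol
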